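/- Let l ≥ 0 be an integer and let f : ℝ × ℝ^l → ℝ be a Lipschitz continuous function, and let F denote its almost-everywhere defined partial derivative in the first variable (the directional derivative of f in the direction of the first coordinate, which exists almost everywhere). Then the distributional derivative of f with respect to the first variable equals F: for every smooth compactly supported function φ : ℝ × ℝ^l → ℝ one has ∫ F(x,y)·φ(x,y) dx dy = − ∫ f(x,y)·(∂φ/∂x)(x,y) dx dy. -/

import Mathlib

open MeasureTheory Filter

/-- The line derivative in the direction of the first coordinate of a product is the partial
derivative in the first variable. -/
theorem lineDeriv_fst_direction {E : Type*} [AddCommGroup E] [Module ℝ E]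
    (f : ℝ × E → ℝ) (p : ℝ × E) :
    lineDeriv ℝ f p (1, 0) = deriv (fun x => f (x, p.2)) p.1 := by
  have h := deriv_comp_const_add (fun x => f (x, p.2)) p.1 0
  rw [add_zero] at h
  rw [← h, lineDeriv]
  congr 1
  ext t
  congr 1
  ext <;> simp

/-- A limit of difference quotients in the first variable is a line derivative in the direction
of the first coordinate. -/
theorem hasLineDerivAt_fst_direction_of_tendsto {E : Type*} [AddCommGroup E] [Module ℝ E]
    {f : ℝ × E → ℝ} {p : ℝ × E} {a : ℝ}
    (h : Tendsto (fun t : ℝ => (f (p.1 + t, p.2) - f p) / t)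
      (nhdsWithin 0 {0}ᶜ) (nhds a)) :
    HasLineDerivAt ℝ f a p (1, 0) := by
  rw [HasLineDerivAt, hasDerivAt_iff_tendsto_slope_zero]
  refine h.congr fun t => ?_
  have ht : p + t • ((1, 0) : ℝ × E) = (p.1 + t, p.2) := by ext <;> simp
  simp only [zero_add, zero_smul, add_zero, ht, div_eq_inv_mul, smul_eq_mul]

/-- For a Lipschitz function `f : ℝ × ℝ^l → ℝ`, the distributional derivative
of `f` with respect to the first variable equals its almost-everywhere defined partial
derivative `F`: for every smooth compactly supported test function `φ`,
`∫ F·φ = −∫ f·(∂φ/∂x)`. -/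
theorem lipschitz_distributional_deriv_eq_ae_partial_deriv
    (l : ℕ) (C : NNReal) (f F : ℝ × (Fin l → ℝ) → ℝ)
    (hf : LipschitzWith C f) (hFmeas : Measurable F)
    (hF : ∀ᵐ p : ℝ × (Fin l → ℝ) ∂volume,
      Tendsto (fun h : ℝ => (f (p.1 + h, p.2) - f p) / h)
        (nhdsWithin 0 {0}ᶜ) (nhds (F p))) :
    ∀ φ : ℝ × (Fin l → ℝ) → ℝ, ContDiff ℝ (⊤ : ℕ∞) φ → HasCompactSupport φ →
      ∫ p, F p * φ p = - ∫ p, f p * deriv (fun x => φ (x, p.2)) p.1 := by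
  intro φ hφ hφc
  obtain ⟨D, hD⟩ := hφ.lipschitzWith_of_hasCompactSupport hφc (by simp)
  have : (volume : Measure (ℝ × (Fin l → ℝ))).IsAddHaarMeasure := by
    rw [Measure.volume_eq_prod]; infer_instance
  calc ∫ p, F p * φ p
      = ∫ p, lineDeriv ℝ f p (1, 0) * φ p := by
        refine integral_congr_ae ?_
        filter_upwards [hF] with p hp
        rw [(hasLineDerivAt_fst_direction_of_tendsto hp).lineDeriv]
    _ = ∫ p, lineDeriv ℝ φ p (-(1, 0)) * f p := hf.integral_lineDeriv_mul_eq hD hφc _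
    _ = - ∫ p, f p * deriv (fun x => φ (x, p.2)) p.1 := by
        rw [← integral_neg]
        congr 1 with p
        rw [lineDeriv_neg, lineDeriv_fst_direction]
        ring
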